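/- arXiv:1711.06912 — 2 statements merged into one kernel-verified Lean document; each statement's English description precedes it below -/
import Mathlib

section
/- For all integers 0 ≤ s ≤ t, the optimal complementary coverage probabilities form a supermartingale with respect to one more observation: m_t(s)·𝒞_t(s) ≥ m_{t+1}(s+1)·𝒞_{t+1}(s+1) + m_{t+1}(s)·𝒞_{t+1}(s); equivalently, 𝒞_t(s) ≥ g_{t+1}(s)·𝒞_{t+1}(s+1) + (1 − g_{t+1}(s))·𝒞_{t+1}(s). -/
open MeasureTheory Set


/-- `m_t(s) = ∫_0^1 θ^s (1-θ)^(t-s) π(θ) dθ`. -/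
noncomputable def margLik (π : ℝ → ℝ) (t s : ℕ) : ℝ :=
  ∫ θ in Ioc (0:ℝ) 1, θ ^ s * (1 - θ) ^ (t - s) * π θ

/-- Posterior density `π_t(θ|s)`. -/
noncomputable def postDens (π : ℝ → ℝ) (t s : ℕ) (θ : ℝ) : ℝ :=
  θ ^ s * (1 - θ) ^ (t - s) * π θ / margLik π t s

/-- Posterior coverage of the interval `[a-h, a+h]` cropped to `[0,1]`. -/
noncomputable def covFn (h : ℝ) (π : ℝ → ℝ) (t s : ℕ) (a : ℝ) : ℝ :=
  ∫ θ in Ioc (max (a - h) 0) (min (a + h) 1), postDens π t s θ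

/-- Optimal conditional complementary coverage probability `𝒞_t(s)`. -/
noncomputable def Copt (h : ℝ) (π : ℝ → ℝ) (t s : ℕ) : ℝ :=
  1 - sSup (covFn h π t s '' Icc 0 1)

/-- Predictive probability `g_{t+1}(s) = m_{t+1}(s+1)/m_t(s)`. -/
noncomputable def gpred (π : ℝ → ℝ) (t s : ℕ) : ℝ :=
  margLik π (t + 1) (s + 1) / margLik π t s

/-- Auxiliary backward recursion: `Vaux k s = V_{N-k}(s)`. -/
noncomputable def Vaux (h : ℝ) (π : ℝ → ℝ) (c : ℝ) (N : ℕ) : ℕ → ℕ → ℝ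
  | 0, s => Copt h π N s
  | k + 1, s =>
      min (Copt h π (N - (k + 1)) s)
        (c + gpred π (N - (k + 1)) s * Vaux h π c N k (s + 1)
           + (1 - gpred π (N - (k + 1)) s) * Vaux h π c N k s)

/-- Optimal residual cost `V_t(s)` for horizon `N` and sampling cost `c`. -/
noncomputable def Vopt (h : ℝ) (π : ℝ → ℝ) (c : ℝ) (N t s : ℕ) : ℝ :=
  Vaux h π c N (N - t) s

/-!
Multiplying `𝒞_t(s)` by `m_t(s)` clears the normalisation of the posterior and leaves
`m_t(s) - sup_a ∫_{I_a} f_t(s)`, where `I_a` is the window around `a` and `f_t(s)` the joint density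
of parameter and data. One more observation splits the joint density,
`f_t(s) = f_{t+1}(s+1) + f_{t+1}(s)`. The first term `m` is additive along this splitting, and the
supremum is subadditive, because the centre `a` may be chosen after seeing the observation.
-/

section SetIntegral

variable {α ι : Type*} [MeasurableSpace α] {μ : Measure α} {f g : α → ℝ} {T : Set α} {S : ι → Set α}

theorem bddAbove_range_setIntegral (hf : IntegrableOn f T μ) (hS : ∀ i, S i ⊆ T) :
    BddAbove (range fun i => ∫ x in S i, f x ∂μ) := by
  refine ⟨∫ x in T, ‖f x‖ ∂μ, forall_mem_range.2 fun i => ?_⟩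
  calc ∫ x in S i, f x ∂μ
      ≤ ∫ x in S i, ‖f x‖ ∂μ := (le_abs_self _).trans (norm_integral_le_integral_norm f)
    _ ≤ ∫ x in T, ‖f x‖ ∂μ :=
        setIntegral_mono_set hf.norm (.of_forall fun x => norm_nonneg (f x)) (hS i).eventuallyLE

theorem iSup_setIntegral_add_le [Nonempty ι] (hf : IntegrableOn f T μ) (hg : IntegrableOn g T μ)
    (hS : ∀ i, S i ⊆ T) :
    ⨆ i, ∫ x in S i, (f x + g x) ∂μ ≤
      (⨆ i, ∫ x in S i, f x ∂μ) + ⨆ i, ∫ x in S i, g x ∂μ := by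
  refine ciSup_le fun i => ?_
  rw [integral_add (hf.mono_set (hS i)) (hg.mono_set (hS i))]
  exact add_le_add (le_ciSup (bddAbove_range_setIntegral hf hS) i)
    (le_ciSup (bddAbove_range_setIntegral hg hS) i)

end SetIntegral

/-- The joint density `θ^s (1-θ)^(t-s) π(θ)` of the parameter and a given sequence of `t` Bernoulli
observations with `s` successes; `margLik` is its integral over the parameter. -/
noncomputable def jointDens (π : ℝ → ℝ) (t s : ℕ) (θ : ℝ) : ℝ :=
  θ ^ s * (1 - θ) ^ (t - s) * π θ

/-- The interval `[a-h, a+h]` cropped to `[0,1]`, half-open like the domains of integration of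
`margLik` and `covFn`. -/
def window (h a : ℝ) : Set ℝ :=
  Ioc (max (a - h) 0) (min (a + h) 1)

/-- The largest joint mass `sup_a ∫_{window h a} jointDens` that a window can capture, that is, the
optimal posterior coverage without the normalising factor `1 / m_t(s)`. -/
noncomputable def optMass (h : ℝ) (π : ℝ → ℝ) (t s : ℕ) : ℝ :=
  ⨆ a : Icc (0 : ℝ) 1, ∫ θ in window h a, jointDens π t s θ

theorem window_subset_Ioc (h a : ℝ) : window h a ⊆ Ioc 0 1 :=
  Ioc_subset_Ioc (le_max_right _ _) (min_le_right _ _)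

section

variable (h : ℝ) {π : ℝ → ℝ} {t s : ℕ}

theorem jointDens_eq_add_succ (π : ℝ → ℝ) (hst : s ≤ t) (θ : ℝ) :
    jointDens π t s θ = jointDens π (t + 1) (s + 1) θ + jointDens π (t + 1) s θ := by
  simp only [jointDens, Nat.add_sub_add_right, Nat.sub_add_comm hst, pow_succ]
  ring

theorem integrableOn_jointDens (hm : margLik π t s ≠ 0) :
    IntegrableOn (jointDens π t s) (Ioc 0 1) :=
  .of_integral_ne_zero hm

theorem margLik_eq_add_succ (hst : s ≤ t)
    (hsucc : IntegrableOn (jointDens π (t + 1) (s + 1)) (Ioc 0 1))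
    (hfail : IntegrableOn (jointDens π (t + 1) s) (Ioc 0 1)) :
    margLik π t s = margLik π (t + 1) (s + 1) + margLik π (t + 1) s :=
  calc margLik π t s
      = ∫ θ in Ioc (0 : ℝ) 1, (jointDens π (t + 1) (s + 1) θ + jointDens π (t + 1) s θ) :=
        integral_congr_ae (.of_forall (jointDens_eq_add_succ π hst))
    _ = margLik π (t + 1) (s + 1) + margLik π (t + 1) s := integral_add hsucc hfail

theorem optMass_le_add_succ (hst : s ≤ t)
    (hsucc : IntegrableOn (jointDens π (t + 1) (s + 1)) (Ioc 0 1))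
    (hfail : IntegrableOn (jointDens π (t + 1) s) (Ioc 0 1)) :
    optMass h π t s ≤ optMass h π (t + 1) (s + 1) + optMass h π (t + 1) s := by
  simp only [optMass, jointDens_eq_add_succ π hst]
  exact iSup_setIntegral_add_le hsucc hfail fun a => window_subset_Ioc h a

theorem margLik_mul_covFn (hm : margLik π t s ≠ 0) (a : ℝ) :
    margLik π t s * covFn h π t s a = ∫ θ in window h a, jointDens π t s θ := by
  simp only [covFn, postDens, integral_div]
  exact mul_div_cancel₀ _ hm

theorem margLik_mul_Copt (hm : 0 < margLik π t s) :
    margLik π t s * Copt h π t s = margLik π t s - optMass h π t s := by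
  simp only [Copt, optMass, mul_sub, mul_one, sSup_image', Real.mul_iSup_of_nonneg hm.le,
    margLik_mul_covFn h hm.ne']

theorem one_sub_gpred (hm : margLik π t s ≠ 0)
    (hsum : margLik π t s = margLik π (t + 1) (s + 1) + margLik π (t + 1) s) :
    1 - gpred π t s = margLik π (t + 1) s / margLik π t s := by
  rw [gpred, one_sub_div hm, hsum, add_sub_cancel_left]

end

theorem Copt_supermartingale_general (h : ℝ) (π : ℝ → ℝ) {t s : ℕ} (hst : s ≤ t)
    (hsucc : 0 < margLik π (t + 1) (s + 1)) (hfail : 0 < margLik π (t + 1) s) :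
    (margLik π (t + 1) (s + 1) * Copt h π (t + 1) (s + 1)
          + margLik π (t + 1) s * Copt h π (t + 1) s
        ≤ margLik π t s * Copt h π t s) ∧
      (gpred π t s * Copt h π (t + 1) (s + 1)
          + (1 - gpred π t s) * Copt h π (t + 1) s
        ≤ Copt h π t s) := by
  have int_succ := integrableOn_jointDens hsucc.ne'
  have int_fail := integrableOn_jointDens hfail.ne'
  have margLik_eq := margLik_eq_add_succ hst int_succ int_fail
  have margLik_pos : 0 < margLik π t s := margLik_eq ▸ add_pos hsucc hfail
  have weighted_le : margLik π (t + 1) (s + 1) * Copt h π (t + 1) (s + 1)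
      + margLik π (t + 1) s * Copt h π (t + 1) s ≤ margLik π t s * Copt h π t s := by
    rw [margLik_mul_Copt h hsucc, margLik_mul_Copt h hfail, margLik_mul_Copt h margLik_pos]
    linarith [optMass_le_add_succ h hst int_succ int_fail]
  refine ⟨weighted_le, ?_⟩
  rwa [one_sub_gpred margLik_pos.ne' margLik_eq, gpred, div_mul_eq_mul_div, div_mul_eq_mul_div,
    ← add_div, div_le_iff₀' margLik_pos]

/-- the optimal complementary coverage probabilities form a
supermartingale with respect to one more observation. -/
theorem Copt_supermartingale (h : ℝ) (hh : 0 < h ∧ h < 1 / 2)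
    (π : ℝ → ℝ) (hπ0 : ∀ θ, 0 ≤ π θ) (hπ1 : (∫ θ in (0:ℝ)..1, π θ) = 1)
    (hm : ∀ t s : ℕ, 0 < margLik π t s) :
    ∀ t s : ℕ, s ≤ t →
      (margLik π (t + 1) (s + 1) * Copt h π (t + 1) (s + 1)
          + margLik π (t + 1) s * Copt h π (t + 1) s
        ≤ margLik π t s * Copt h π t s) ∧
      (gpred π t s * Copt h π (t + 1) (s + 1)
          + (1 - gpred π t s) * Copt h π (t + 1) s
        ≤ Copt h π t s) :=
  fun _ _ hst => Copt_supermartingale_general h π hst (hm _ _) (hm _ _)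
end

section
/- Let a > 0 and take the prior π(θ) = θ^{a−1}(1−θ)^{a−1}/B(a,a) (the Beta(a,a) density). Then for all integers 0 ≤ s ≤ t, the optimal conditional complementary coverage probability satisfies 𝒞_t(s) ≤ 2·e^{−2h²(t+2a+1)}. -/
open MeasureTheory Set


/-- The Beta function `B(p,q) = ∫_0^1 x^(p-1) (1-x)^(q-1) dx`. -/
noncomputable def betaFn (p q : ℝ) : ℝ :=
  ∫ x in Ioc (0:ℝ) 1, x ^ (p - 1) * (1 - x) ^ (q - 1)

/-!
By conjugacy the posterior is a Beta distribution, with parameters `α`, `β` summing to `n`, say, and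
it suffices to test the supremum at its mean `α / n`. The two tails beyond `α / n ± h` are
controlled by showing that Beta(`α`, `β`) is sub-Gaussian with variance proxy `1 / (4 (n + 1))`.

Integrating the derivative of `x ^ α * (1 - x) ^ β * exp (u x)` over `[0, 1]` gives Kummer's
equation for the moment generating function; for its logarithm `κ` it becomes the Riccati equation
`n κ' + u κ'' = α + u κ' (1 - κ')`. Let `g = κ' - α / n - u / (4 (n + 1))`. Since
`κ' (1 - κ') = 1 / 4 - (κ' - 1 / 2) ^ 2`, the equation yields `n g + u g' = -u (κ' - 1 / 2) ^ 2`, so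
`(u ^ n g)' ≤ 0` for `u > 0`, and symmetrically for `u < 0`. Hence `g` has the sign opposite to `u`,
and integrating from `0` bounds `κ u` by `u α / n + u ^ 2 / (8 (n + 1))`.
-/

open ProbabilityTheory

section DifferentialInequality

lemma nonpos_of_mul_add_mul_deriv_nonpos {n : ℝ} (hn : 0 < n) {g g' : ℝ → ℝ}
    (hcont : ContinuousOn g (Ici 0)) (hderiv : ∀ u, 0 < u → HasDerivAt g (g' u) u)
    (hode : ∀ u, 0 < u → n * g u + u * g' u ≤ 0) {u : ℝ} (hu : 0 < u) : g u ≤ 0 := by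
  have hderiv_weighted : ∀ v ∈ interior (Ici (0 : ℝ)), HasDerivAt (fun v ↦ v ^ n * g v)
      (v ^ (n - 1) * (n * g v + v * g' v)) v := by
    intro v hv
    rw [interior_Ici, mem_Ioi] at hv
    refine ((Real.hasDerivAt_rpow_const (Or.inl hv.ne')).mul (hderiv v hv)).congr_deriv ?_
    rw [Real.rpow_sub_one hv.ne']
    field_simp
  have hanti : AntitoneOn (fun v ↦ v ^ n * g v) (Ici 0) := by
    refine antitoneOn_of_hasDerivWithinAt_nonpos (convex_Ici 0)
      ((Real.continuous_rpow_const hn.le).continuousOn.mul hcont)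
      (fun v hv ↦ (hderiv_weighted v hv).hasDerivWithinAt) fun v hv ↦ ?_
    rw [interior_Ici, mem_Ioi] at hv
    exact mul_nonpos_of_nonneg_of_nonpos (Real.rpow_nonneg hv.le _) (hode v hv)
  have hle : u ^ n * g u ≤ 0 := by
    simpa [Real.zero_rpow hn.ne'] using hanti self_mem_Ici hu.le hu.le
  exact nonpos_of_mul_nonpos_right hle (Real.rpow_pos_of_pos hu n)

lemma mul_nonpos_of_mul_mul_add_mul_deriv_nonpos {n : ℝ} (hn : 0 < n) {g g' : ℝ → ℝ}
    (hderiv : ∀ u, HasDerivAt g (g' u) u) (hode : ∀ u, u * (n * g u + u * g' u) ≤ 0) (u : ℝ) :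
    u * g u ≤ 0 := by
  have hcont : Continuous g := continuous_iff_continuousAt.2 fun v ↦ (hderiv v).continuousAt
  rcases lt_trichotomy u 0 with hu | rfl | hu
  · have hreflect : -g (- -u) ≤ 0 := by
      refine nonpos_of_mul_add_mul_deriv_nonpos hn (g := fun v ↦ -g (-v)) (g' := fun v ↦ g' (-v))
        (by fun_prop) (fun v _ ↦ ?_) (fun v hv ↦ ?_) (neg_pos.2 hu)
      · simpa [Function.comp_def] using ((hderiv (-v)).comp v (hasDerivAt_neg v)).fun_neg
      · exact nonpos_of_mul_nonpos_right (by linarith [hode (-v)]) hv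
    rw [neg_neg] at hreflect
    exact mul_nonpos_of_nonpos_of_nonneg hu.le (by linarith)
  · simp
  · exact mul_nonpos_of_nonneg_of_nonpos hu.le <|
      nonpos_of_mul_add_mul_deriv_nonpos hn hcont.continuousOn (fun v _ ↦ hderiv v)
        (fun v hv ↦ nonpos_of_mul_nonpos_right (hode v) hv) hu

lemma apply_le_apply_zero_of_mul_deriv_nonpos {F F' : ℝ → ℝ} (hderiv : ∀ u, HasDerivAt F (F' u) u)
    (hsign : ∀ u, u * F' u ≤ 0) (u : ℝ) : F u ≤ F 0 := by
  have hcont : Continuous F := continuous_iff_continuousAt.2 fun v ↦ (hderiv v).continuousAt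
  rcases le_total 0 u with hu | hu
  · have hanti : AntitoneOn F (Ici 0) := by
      refine antitoneOn_of_hasDerivWithinAt_nonpos (convex_Ici 0) hcont.continuousOn
        (fun v _ ↦ (hderiv v).hasDerivWithinAt) fun v hv ↦ ?_
      rw [interior_Ici, mem_Ioi] at hv
      exact nonpos_of_mul_nonpos_right (hsign v) hv
    exact hanti self_mem_Ici hu hu
  · have hmono : MonotoneOn F (Iic 0) := by
      refine monotoneOn_of_hasDerivWithinAt_nonneg (convex_Iic 0) hcont.continuousOn
        (fun v _ ↦ (hderiv v).hasDerivWithinAt) fun v hv ↦ ?_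
      rw [interior_Iic, mem_Iio] at hv
      exact nonneg_of_mul_nonpos_right (hsign v) hv
    exact hmono hu self_mem_Iic hu

end DifferentialInequality

section BetaMeasure

variable {α β : ℝ}

lemma betaPDFReal_nonneg (hα : 0 < α) (hβ : 0 < β) (x : ℝ) : 0 ≤ betaPDFReal α β x := by
  by_cases hx : 0 < x ∧ x < 1
  · exact (betaPDFReal_pos hx.1 hx.2 hα hβ).le
  · rw [betaPDFReal, if_neg hx]

lemma integral_betaMeasure (hα : 0 < α) (hβ : 0 < β) (f : ℝ → ℝ) :
    ∫ x, f x ∂betaMeasure α β =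
      (∫ x in Ioc 0 1, x ^ (α - 1) * (1 - x) ^ (β - 1) * f x) / beta α β := by
  have hdensity : ∀ x, (betaPDF α β x).toReal • f x = (Ioo (0 : ℝ) 1).indicator
      (fun x ↦ x ^ (α - 1) * (1 - x) ^ (β - 1) * f x / beta α β) x := by
    intro x
    rw [betaPDF, ENNReal.toReal_ofReal (betaPDFReal_nonneg hα hβ x), betaPDFReal]
    by_cases hx : x ∈ Ioo 0 1
    · rw [if_pos ⟨hx.1, hx.2⟩, indicator_of_mem hx, smul_eq_mul]
      ring
    · rw [if_neg (show ¬(0 < x ∧ x < 1) from hx), indicator_of_notMem hx, zero_smul]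
  rw [betaMeasure, integral_withDensity_eq_integral_toReal_smul (f := betaPDF α β)
      (measurable_betaPDFReal α β).ennreal_ofReal (ae_of_all _ fun _ ↦ ENNReal.ofReal_lt_top),
    integral_congr_ae (ae_of_all _ hdensity), integral_indicator measurableSet_Ioo,
    integral_div, integral_Ioc_eq_integral_Ioo]

lemma betaFn_eq_beta (hα : 0 < α) (hβ : 0 < β) : betaFn α β = beta α β := by
  have := isProbabilityMeasureBeta hα hβ
  have hone := integral_betaMeasure hα hβ 1
  simp only [Pi.one_apply, mul_one, integral_const, probReal_univ, smul_eq_mul] at hone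
  exact eq_of_div_eq_one hone.symm

lemma betaFn_pos (hα : 0 < α) (hβ : 0 < β) : 0 < betaFn α β :=
  betaFn_eq_beta hα hβ ▸ beta_pos hα hβ

lemma integrableOn_rpow_mul_one_sub_rpow (hα : 0 < α) (hβ : 0 < β) :
    IntegrableOn (fun x : ℝ ↦ x ^ (α - 1) * (1 - x) ^ (β - 1)) (Ioc 0 1) :=
  Integrable.of_integral_ne_zero (betaFn_pos hα hβ).ne'

lemma ae_betaMeasure_mem_Ioo (α β : ℝ) : ∀ᵐ x ∂betaMeasure α β, x ∈ Ioo (0 : ℝ) 1 := by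
  rw [betaMeasure, ae_withDensity_iff (f := betaPDF α β)
    (measurable_betaPDFReal α β).ennreal_ofReal]
  refine ae_of_all _ fun x hx ↦ ⟨?_, ?_⟩
  · exact not_le.1 fun hx0 ↦ hx (betaPDF_eq_zero_of_nonpos hx0)
  · exact not_le.1 fun hx1 ↦ hx (betaPDF_eq_zero_of_one_le hx1)

lemma hasDerivAt_rpow_mul_one_sub_rpow_mul (α β : ℝ) {f : ℝ → ℝ} {f' x : ℝ} (hx : x ∈ Ioo 0 1)
    (hf : HasDerivAt f f' x) :
    HasDerivAt (fun x ↦ x ^ α * (1 - x) ^ β * f x)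
      (x ^ (α - 1) * (1 - x) ^ (β - 1) *
        ((α - (α + β) * x) * f x + x * (1 - x) * f')) x := by
  have hx0 : x ≠ 0 := hx.1.ne'
  have hx1 : 1 - x ≠ 0 := (sub_pos.2 hx.2).ne'
  refine (((Real.hasDerivAt_rpow_const (Or.inl hx0)).mul
    (((hasDerivAt_id x).const_sub 1).rpow_const (Or.inl hx1))).mul hf).congr_deriv ?_
  simp only [Pi.mul_apply, id, Real.rpow_sub_one hx0, Real.rpow_sub_one hx1]
  field_simp
  ring

lemma integral_betaMeasure_stein (hα : 0 < α) (hβ : 0 < β) {f f' : ℝ → ℝ}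
    (hf : ContinuousOn f (Icc 0 1)) (hderiv : ∀ x ∈ Ioo 0 1, HasDerivAt f (f' x) x)
    (hf' : ContinuousOn f' (Icc 0 1)) :
    ∫ x, ((α - (α + β) * x) * f x + x * (1 - x) * f' x) ∂betaMeasure α β = 0 := by
  have hcont : ContinuousOn (fun x ↦ x ^ α * (1 - x) ^ β * f x) (Icc 0 1) := by
    refine (Continuous.continuousOn ?_).mul hf
    exact (Real.continuous_rpow_const hα.le).mul
      ((Real.continuous_rpow_const hβ.le).comp (by fun_prop : Continuous fun x : ℝ ↦ 1 - x))
  have hint : IntervalIntegrable (fun x ↦ x ^ (α - 1) * (1 - x) ^ (β - 1) *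
      ((α - (α + β) * x) * f x + x * (1 - x) * f' x)) volume 0 1 := by
    rw [intervalIntegrable_iff_integrableOn_Icc_of_le zero_le_one]
    have hkernel := (integrableOn_Icc_iff_integrableOn_Ioc (by finiteness)).2
      (integrableOn_rpow_mul_one_sub_rpow hα hβ)
    exact hkernel.mul_continuousOn (by fun_prop) isCompact_Icc
  have hFTC := intervalIntegral.integral_eq_sub_of_hasDerivAt_of_le zero_le_one hcont
    (fun x hx ↦ hasDerivAt_rpow_mul_one_sub_rpow_mul α β hx (hderiv x hx)) hint
  rw [integral_betaMeasure hα hβ, ← intervalIntegral.integral_of_le zero_le_one, hFTC]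
  simp [Real.zero_rpow hα.ne', Real.zero_rpow hβ.ne']

lemma integrable_exp_mul_id_betaMeasure (hα : 0 < α) (hβ : 0 < β) (u : ℝ) :
    Integrable (fun x ↦ Real.exp (u * id x)) (betaMeasure α β) := by
  have := isProbabilityMeasureBeta hα hβ
  exact integrable_exp_mul_of_mem_Icc aemeasurable_id
    ((ae_betaMeasure_mem_Ioo α β).mono fun _ hx ↦ Ioo_subset_Icc_self hx)

lemma mem_interior_integrableExpSet_betaMeasure (hα : 0 < α) (hβ : 0 < β) (u : ℝ) :
    u ∈ interior (integrableExpSet id (betaMeasure α β)) := by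
  rw [show integrableExpSet id (betaMeasure α β) = univ from
    eq_univ_of_forall (integrable_exp_mul_id_betaMeasure hα hβ), interior_univ]
  exact mem_univ u

-- Kummer's equation `u M'' + (α + β - u) M' - α M = 0` for `M = mgf id (betaMeasure α β)`.
lemma mgf_betaMeasure_kummer (hα : 0 < α) (hβ : 0 < β) (u : ℝ) :
    u * ∫ x, x ^ 2 * Real.exp (u * x) ∂betaMeasure α β
      + (α + β - u) * ∫ x, x * Real.exp (u * x) ∂betaMeasure α β
      - α * mgf id (betaMeasure α β) u = 0 := by
  have hu := mem_interior_integrableExpSet_betaMeasure hα hβ u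
  have hint := (integrable_exp_mul_id_betaMeasure hα hβ u).const_mul α
  have hint_one := (integrable_pow_mul_exp_of_mem_interior_integrableExpSet hu 1).const_mul
    (α + β - u)
  have hint_two := (integrable_pow_mul_exp_of_mem_interior_integrableExpSet hu 2).const_mul u
  have hstein := integral_betaMeasure_stein hα hβ (f := fun x ↦ Real.exp (u * x))
    (f' := fun x ↦ u * Real.exp (u * x)) (by fun_prop)
    (fun x _ ↦ by simpa [mul_comm] using ((hasDerivAt_id x).const_mul u).exp) (by fun_prop)
  simp only [id, pow_one] at hint hint_one hint_two
  simp only [mgf, id]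
  rw [← integral_const_mul, ← integral_const_mul, ← integral_const_mul,
    ← integral_add hint_two hint_one, ← integral_sub (hint_two.fun_add hint_one) hint,
    ← neg_eq_zero, ← integral_neg, ← hstein]
  congr 1 with x
  ring

lemma cgf_betaMeasure_riccati (hα : 0 < α) (hβ : 0 < β) (u : ℝ) :
    (α + β) * deriv (cgf id (betaMeasure α β)) u +
        u * iteratedDeriv 2 (cgf id (betaMeasure α β)) u =
      α + u * (deriv (cgf id (betaMeasure α β)) u *
        (1 - deriv (cgf id (betaMeasure α β)) u)) := by
  have := isProbabilityMeasureBeta hα hβ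
  have hu := mem_interior_integrableExpSet_betaMeasure hα hβ u
  have hmgf : mgf id (betaMeasure α β) u ≠ 0 :=
    (mgf_pos (integrable_exp_mul_id_betaMeasure hα hβ u)).ne'
  have hkummer := mgf_betaMeasure_kummer hα hβ u
  rw [iteratedDeriv_two_cgf hu, deriv_cgf hu]
  simp only [id]
  generalize ∫ x, x * Real.exp (u * x) ∂betaMeasure α β = m₁ at hkummer ⊢
  generalize ∫ x, x ^ 2 * Real.exp (u * x) ∂betaMeasure α β = m₂ at hkummer ⊢
  field_simp
  linear_combination mgf id (betaMeasure α β) u * hkummer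

lemma cgf_betaMeasure_le (hα : 0 < α) (hβ : 0 < β) (u : ℝ) :
    cgf id (betaMeasure α β) u ≤ u * (α / (α + β)) + u ^ 2 / (8 * (α + β + 1)) := by
  have := isProbabilityMeasureBeta hα hβ
  set κ := cgf id (betaMeasure α β)
  have hanalytic (v : ℝ) : AnalyticAt ℝ κ v :=
    analyticAt_cgf (mem_interior_integrableExpSet_betaMeasure hα hβ v)
  have hderiv_gap (v : ℝ) : HasDerivAt
      (fun v ↦ κ v - v * (α / (α + β)) - v ^ 2 / (8 * (α + β + 1)))
      (deriv κ v - α / (α + β) - v / (4 * (α + β + 1))) v := by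
    refine (((hanalytic v).differentiableAt.hasDerivAt.sub
      ((hasDerivAt_id v).mul_const _)).sub ((hasDerivAt_pow 2 v).div_const _)).congr_deriv ?_
    field_simp
    ring
  have hderiv_slope (v : ℝ) : HasDerivAt
      (fun v ↦ deriv κ v - α / (α + β) - v / (4 * (α + β + 1)))
      (iteratedDeriv 2 κ v - 1 / (4 * (α + β + 1))) v := by
    rw [iteratedDeriv_succ, iteratedDeriv_one]
    exact ((hanalytic v).deriv.differentiableAt.hasDerivAt.sub_const _).sub
      ((hasDerivAt_id v).div_const _)
  have hode (v : ℝ) : (α + β) * (deriv κ v - α / (α + β) - v / (4 * (α + β + 1))) +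
      v * (iteratedDeriv 2 κ v - 1 / (4 * (α + β + 1))) = -(v * (deriv κ v - 1 / 2) ^ 2) := by
    field_simp
    linear_combination 16 * (α + β + 1) * cgf_betaMeasure_riccati hα hβ v
  have hsign := mul_nonpos_of_mul_mul_add_mul_deriv_nonpos (add_pos hα hβ) hderiv_slope fun v ↦ by
    rw [hode]
    nlinarith [sq_nonneg (v * (deriv κ v - 1 / 2))]
  have hgap := apply_le_apply_zero_of_mul_deriv_nonpos hderiv_gap hsign u
  have hzero : κ 0 = 0 := cgf_zero
  simp only [hzero, zero_mul, sub_zero, ne_eq, OfNat.ofNat_ne_zero, not_false_eq_true, zero_pow,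
    zero_div] at hgap
  linarith

lemma hasSubgaussianMGF_betaMeasure (hα : 0 < α) (hβ : 0 < β) :
    HasSubgaussianMGF (fun x ↦ x - α / (α + β)) (1 / (4 * (α + β + 1))).toNNReal
      (betaMeasure α β) where
  integrable_exp_mul u := by
    simpa [mul_sub, Real.exp_sub] using
      (integrable_exp_mul_id_betaMeasure hα hβ u).div_const (Real.exp (u * (α / (α + β))))
  mgf_le u := by
    have hmgf : mgf (fun x ↦ x - α / (α + β)) (betaMeasure α β) u =
        Real.exp (cgf id (betaMeasure α β) u - u * (α / (α + β))) := by
      have := isProbabilityMeasureBeta hα hβ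
      rw [Real.exp_sub, exp_cgf (integrable_exp_mul_id_betaMeasure hα hβ u)]
      simp [mgf, mul_sub, Real.exp_sub, integral_div]
    rw [hmgf, Real.coe_toNNReal _ (by positivity), Real.exp_le_exp, sub_le_iff_le_add']
    refine (cgf_betaMeasure_le hα hβ u).trans_eq ?_
    field_simp
    ring

end BetaMeasure

lemma measureReal_le_abs_le_of_hasSubgaussianMGF {Ω : Type*} [MeasurableSpace Ω] {μ : Measure Ω}
    {X : Ω → ℝ} {c : NNReal} (hX : HasSubgaussianMGF X c μ) {ε : ℝ} (hε : 0 ≤ ε) :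
    μ.real {ω | ε ≤ |X ω|} ≤ 2 * Real.exp (-ε ^ 2 / (2 * c)) := by
  calc μ.real {ω | ε ≤ |X ω|} = μ.real ({ω | ε ≤ X ω} ∪ {ω | ε ≤ (-X) ω}) := by
        simp only [le_abs, ofPred_or, Pi.neg_apply]
    _ ≤ μ.real {ω | ε ≤ X ω} + μ.real {ω | ε ≤ (-X) ω} := measureReal_union_le _ _
    _ ≤ 2 * Real.exp (-ε ^ 2 / (2 * c)) := by
        linarith [hX.measure_ge_le hε, hX.neg.measure_ge_le hε]

lemma one_sub_measureReal_betaMeasure_Ioc_le {α β h : ℝ} (hα : 0 < α) (hβ : 0 < β) (hh : 0 ≤ h) :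
    1 - (betaMeasure α β).real (Ioc (max (α / (α + β) - h) 0) (min (α / (α + β) + h) 1)) ≤
      2 * Real.exp (-2 * h ^ 2 * (α + β + 1)) := by
  have := isProbabilityMeasureBeta hα hβ
  have hcompl : (betaMeasure α β).real
      (Ioc (max (α / (α + β) - h) 0) (min (α / (α + β) + h) 1))ᶜ ≤
      (betaMeasure α β).real {x | h ≤ |x - α / (α + β)|} := by
    refine ENNReal.toReal_mono (measure_ne_top _ _) (measure_mono_ae ?_)
    filter_upwards [ae_betaMeasure_mem_Ioo α β] with x hx hx_notMem
    by_contra hlt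
    obtain ⟨hleft, hright⟩ := abs_lt.1 (not_le.1 hlt)
    exact hx_notMem ⟨max_lt (by linarith) hx.1, le_min (by linarith) hx.2.le⟩
  have htail := measureReal_le_abs_le_of_hasSubgaussianMGF
    (hasSubgaussianMGF_betaMeasure hα hβ) hh
  have hexponent : -h ^ 2 / (2 * ((1 / (4 * (α + β + 1))).toNNReal : ℝ)) =
      -2 * h ^ 2 * (α + β + 1) := by
    rw [Real.coe_toNNReal _ (by positivity)]
    field_simp
    ring
  rw [← probReal_compl_eq_one_sub measurableSet_Ioc, ← hexponent]
  exact hcompl.trans htail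

section Posterior

/-- The density of the Beta(`p`, `q`) distribution, used both as prior and as posterior. Unlike
`betaPDFReal` it is not cut off outside `(0, 1)`, where its values carry no meaning. -/
noncomputable def betaDensity (p q θ : ℝ) : ℝ :=
  θ ^ (p - 1) * (1 - θ) ^ (q - 1) / betaFn p q

variable {p q : ℝ}

lemma setIntegral_betaDensity (hp : 0 < p) (hq : 0 < q) {S : Set ℝ} (hS : MeasurableSet S)
    (hS01 : S ⊆ Ioc 0 1) :
    ∫ θ in S, betaDensity p q θ = (betaMeasure p q).real S := by
  rw [← integral_indicator_one hS, integral_betaMeasure hp hq, ← betaFn_eq_beta hp hq,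
    ← integral_div, ← inter_eq_self_of_subset_right hS01, ← setIntegral_indicator hS]
  congr 1 with θ
  by_cases hθ : θ ∈ S <;> simp [hθ, hS01, betaDensity, inter_eq_self_of_subset_right]

lemma pow_mul_pow_mul_betaDensity (p q : ℝ) (m n : ℕ) {θ : ℝ} (hθ : θ ∈ Ioo 0 1) :
    θ ^ m * (1 - θ) ^ n * betaDensity p q θ =
      θ ^ (p + m - 1) * (1 - θ) ^ (q + n - 1) / betaFn p q := by
  have hθ1 : 1 - θ ≠ 0 := (sub_pos.2 hθ.2).ne'
  rw [betaDensity, add_sub_right_comm p, add_sub_right_comm q, Real.rpow_add_natCast hθ.1.ne',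
    Real.rpow_add_natCast hθ1]
  ring

lemma margLik_betaDensity (p q : ℝ) (t s : ℕ) :
    margLik (betaDensity p q) t s = betaFn (p + s) (q + (t - s : ℕ)) / betaFn p q := by
  rw [margLik, betaFn.eq_1 (p + s), integral_Ioc_eq_integral_Ioo, integral_Ioc_eq_integral_Ioo,
    ← integral_div]
  exact setIntegral_congr_fun measurableSet_Ioo fun θ hθ ↦ pow_mul_pow_mul_betaDensity p q _ _ hθ

lemma postDens_betaDensity (hp : 0 < p) (hq : 0 < q) (t s : ℕ) {θ : ℝ} (hθ : θ ∈ Ioo 0 1) :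
    postDens (betaDensity p q) t s θ = betaDensity (p + s) (q + (t - s : ℕ)) θ := by
  rw [postDens, margLik_betaDensity, pow_mul_pow_mul_betaDensity p q _ _ hθ,
    div_div_div_cancel_right₀ (betaFn_pos hp hq).ne', betaDensity]

lemma covFn_betaDensity (hp : 0 < p) (hq : 0 < q) (h : ℝ) (t s : ℕ) (c : ℝ) :
    covFn h (betaDensity p q) t s c =
      (betaMeasure (p + s) (q + (t - s : ℕ))).real (Ioc (max (c - h) 0) (min (c + h) 1)) := by
  rw [← setIntegral_betaDensity (by positivity) (by positivity) measurableSet_Ioc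
      (Ioc_subset_Ioc (le_max_right _ _) (min_le_right _ _)),
    covFn, integral_Ioc_eq_integral_Ioo, integral_Ioc_eq_integral_Ioo]
  exact setIntegral_congr_fun measurableSet_Ioo fun θ hθ ↦ postDens_betaDensity hp hq t s
    ⟨(le_max_right _ _).trans_lt hθ.1, hθ.2.trans_le (min_le_right _ _)⟩

lemma Copt_betaDensity_le_one_sub_covFn (hp : 0 < p) (hq : 0 < q) (h : ℝ) (t s : ℕ) {c : ℝ}
    (hc : c ∈ Icc 0 1) :
    Copt h (betaDensity p q) t s ≤ 1 - covFn h (betaDensity p q) t s c := by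
  refine sub_le_sub_left (le_csSup ⟨1, ?_⟩ (mem_image_of_mem _ hc)) 1
  rintro _ ⟨d, -, rfl⟩
  have := isProbabilityMeasureBeta (α := p + s) (β := q + (t - s : ℕ)) (by positivity)
    (by positivity)
  exact covFn_betaDensity hp hq h t s d ▸ measureReal_le_one

end Posterior

theorem Copt_upper_bound_beta_prior_general {h p q : ℝ} (hh : 0 ≤ h) (hp : 0 < p) (hq : 0 < q)
    {t s : ℕ} (hst : s ≤ t) :
    Copt h (betaDensity p q) t s ≤ 2 * Real.exp (-2 * h ^ 2 * (t + p + q + 1)) := by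
  have hα : 0 < p + s := by positivity
  have hβ : 0 < q + (t - s : ℕ) := by positivity
  have hmean : (p + s) / (p + s + (q + (t - s : ℕ))) ∈ Icc (0 : ℝ) 1 :=
    ⟨by positivity, div_le_one_of_le₀ (by linarith) (by positivity)⟩
  calc Copt h (betaDensity p q) t s
      ≤ 1 - covFn h (betaDensity p q) t s ((p + s) / (p + s + (q + (t - s : ℕ)))) :=
        Copt_betaDensity_le_one_sub_covFn hp hq h t s hmean
    _ ≤ 2 * Real.exp (-2 * h ^ 2 * (p + s + (q + (t - s : ℕ)) + 1)) := by
        rw [covFn_betaDensity hp hq]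
        exact one_sub_measureReal_betaMeasure_Ioc_le hα hβ hh
    _ = 2 * Real.exp (-2 * h ^ 2 * (t + p + q + 1)) := by
        rw [Nat.cast_sub hst]
        ring_nf

/-- for the Beta(a,a) prior, the optimal conditional
complementary coverage probability decays exponentially in `t`. -/
theorem Copt_upper_bound_beta_prior (h : ℝ) (hh : 0 < h ∧ h < 1 / 2)
    (a : ℝ) (ha : 0 < a) :
    ∀ t s : ℕ, s ≤ t →
      Copt h (fun θ => θ ^ (a - 1) * (1 - θ) ^ (a - 1) / betaFn a a) t s
        ≤ 2 * Real.exp (-2 * h ^ 2 * ((t : ℝ) + 2 * a + 1)) := by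
  intro t s hst
  rw [two_mul a, ← add_assoc]
  exact Copt_upper_bound_beta_prior_general hh.1.le ha ha hst
end
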